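/- Let n be a finite index type, let P : Matrix n n ℝ be a symmetric positive definite matrix, let h : n → ℝ, let β ∈ ℝ, and let R > 0. Define K = (β / (β² · hᵀ P h + R)) • (P h) and the posterior covariance P' = (I − β • (K hᵀ)) * P. Then P' is symmetric and positive definite. -/

import Mathlib

open Matrix

/-!
The update is one case of the Kalman filter with noise covariance `R` and measurement matrix `H`.
In information form, the Woodbury identity reads
`P - P Hᴴ (H P Hᴴ + R)⁻¹ H P = (P⁻¹ + Hᴴ R⁻¹ H)⁻¹`,
and the right-hand side is the inverse of a positive definite matrix plus a positive semidefinite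
one. The scalar measurement has the `1 × n` measurement matrix `β hᴴ`.
-/

section KalmanUpdate

variable {m n K : Type*} [Fintype m] [DecidableEq m] [Fintype n] [Field K] [StarRing K]

/-- The Kalman gain for prior covariance `P`, measurement matrix `H` and noise covariance `R`.
The inverse is the junk value `0` when the innovation covariance `H P Hᴴ + R` is singular. -/
noncomputable def kalmanGain (P : Matrix n n K) (H : Matrix m n K) (R : Matrix m m K) :
    Matrix n m K :=
  P * Hᴴ * (H * P * Hᴴ + R)⁻¹

/-- The Kalman posterior covariance: the prior `P` after a measurement with matrix `H` and noise
covariance `R`, in the form `(1 - gain * H) * P`. -/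
noncomputable def kalmanPosterior [DecidableEq n] (P : Matrix n n K) (H : Matrix m n K)
    (R : Matrix m m K) : Matrix n n K :=
  (1 - kalmanGain P H R * H) * P

theorem kalmanGain_replicateRow (P : Matrix n n K) (a : n → K) (r : K) :
    kalmanGain P (replicateRow Unit (star a)) (diagonal fun _ => r) =
      replicateCol Unit ((star a ⬝ᵥ P *ᵥ a + r)⁻¹ • P *ᵥ a) := by
  have gain_numerator : P * (replicateRow Unit (star a))ᴴ = replicateCol Unit (P *ᵥ a) := by
    rw [conjTranspose_replicateRow, star_star, replicateCol_mulVec]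
  have innovation : replicateRow Unit (star a) * replicateCol Unit (P *ᵥ a) +
      diagonal (fun _ => r) = diagonal fun _ => star a ⬝ᵥ P *ᵥ a + r := by
    ext
    simp
  rw [kalmanGain, Matrix.mul_assoc (replicateRow _ _), gain_numerator, innovation,
    inv_subsingleton]
  ext
  simp [mul_comm]

variable [PartialOrder K] [DecidableEq n] [AddLeftMono K]
  {P : Matrix n n K} {R : Matrix m m K}

theorem kalmanPosterior_eq_inv (hP : P.PosDef) (hR : R.PosDef) (H : Matrix m n K) :
    kalmanPosterior P H R = (P⁻¹ + Hᴴ * R⁻¹ * H)⁻¹ := by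
  have innovation_posDef : (R + H * P * Hᴴ).PosDef :=
    hR.add_posSemidef (hP.posSemidef.mul_mul_conjTranspose_same H)
  have inv_inv_P : P⁻¹⁻¹ = P := nonsing_inv_nonsing_inv P (isUnit_iff_isUnit_det P |>.1 hP.isUnit)
  have inv_inv_R : R⁻¹⁻¹ = R := nonsing_inv_nonsing_inv R (isUnit_iff_isUnit_det R |>.1 hR.isUnit)
  rw [add_mul_mul_inv_eq_sub _ _ _ _ hP.inv.isUnit hR.inv.isUnit
    (by simpa only [inv_inv_P, inv_inv_R] using innovation_posDef.isUnit), inv_inv_P, inv_inv_R,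
    kalmanPosterior, kalmanGain, add_comm R, Matrix.sub_mul, Matrix.one_mul]

theorem posDef_kalmanPosterior (hP : P.PosDef) (hR : R.PosDef) (H : Matrix m n K) :
    (kalmanPosterior P H R).PosDef := by
  rw [kalmanPosterior_eq_inv hP hR]
  exact (hP.inv.add_posSemidef (hR.inv.posSemidef.conjTranspose_mul_mul_same H)).inv

end KalmanUpdate

theorem stmt_11_general {n K : Type*} [Fintype n] [DecidableEq n] [Field K] [PartialOrder K]
    [StarRing K] [StarOrderedRing K] {P : Matrix n n K} (hP : P.PosDef) (h : n → K) (β : K)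
    {r : K} (hr : 0 < r) :
    ((1 - β • vecMulVec ((star β / (β * star β * (star h ⬝ᵥ P *ᵥ h) + r)) • P *ᵥ h) (star h))
      * P).PosDef := by
  have noise_posDef : (diagonal fun _ : Unit => r).PosDef := .diagonal fun _ => hr
  have gain_mul_measurement :
      kalmanGain P (replicateRow Unit (star (star β • h))) (diagonal fun _ => r) *
          replicateRow Unit (star (star β • h)) =
        β • vecMulVec ((star β / (β * star β * (star h ⬝ᵥ P *ᵥ h) + r)) • P *ᵥ h) (star h) := by
    rw [kalmanGain_replicateRow, ← vecMulVec_eq]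
    simp only [star_smul, star_star, mulVec_smul, smul_dotProduct, dotProduct_smul,
      smul_vecMulVec, vecMulVec_smul, smul_smul, smul_eq_mul]
    ring_nf
  simpa only [kalmanPosterior, gain_mul_measurement] using
    posDef_kalmanPosterior hP noise_posDef (replicateRow Unit (star (star β • h)))

/-- The Kalman-type posterior covariance remains symmetric positive definite. -/
theorem stmt_11 {n : Type*} [Fintype n] [DecidableEq n]
    (P : Matrix n n ℝ) (hP : P.PosDef) (h : n → ℝ) (β : ℝ) (R : ℝ)
    (hR : 0 < R) :
    (((1 : Matrix n n ℝ) -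
          β • vecMulVec ((β / (β ^ 2 * (h ⬝ᵥ P.mulVec h) + R)) • P.mulVec h) h)
        * P).PosDef := by
  simpa only [star_trivial, ← sq] using stmt_11_general hP h β hR
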